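/- Fix integers n ≥ 2 and k, l ≥ 1 with k ≠ l. Writing k_j(π) for the number of blocks of size j in a non-crossing partition π of [n], the mixed moment satisfies Σ_{π ∈ NC(n)} k_k(π)·k_l(π) = n · binom(2n − k − l − 2, n − 2) (with the convention that binom(a,b) = 0 when a < b). -/

import Mathlib

/-- A finite partition of `Fin n` (representing `[n] = {1, …, n}`) is *non-crossing* if
there are no indices `a < b < c < d` with `a, c` in one block and `b, d` in a
different block. -/
def IsNonCrossing {n : ℕ} (P : Finpartition (Finset.univ : Finset (Fin n))) : Prop :=
  ∀ a b c d : Fin n, a < b → b < c → c < d →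
    ∀ B ∈ P.parts, ∀ B' ∈ P.parts,
      a ∈ B → c ∈ B → b ∈ B' → d ∈ B' → B = B'

/-- The type of non-crossing partitions of `[n]`. -/
def NCPart (n : ℕ) : Type :=
  {P : Finpartition (Finset.univ : Finset (Fin n)) // IsNonCrossing P}

noncomputable instance (n : ℕ) : Fintype (NCPart n) :=
  Fintype.ofInjective (fun P => P.1.parts)
    (fun _ _ h => Subtype.ext (Finpartition.ext h))

/-- The number of blocks of a non-crossing partition. -/
def numBlocks {n : ℕ} (P : NCPart n) : ℕ := P.1.parts.card

/-- The number of blocks of size `l` of a non-crossing partition. -/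
def numBlocksOfSize {n : ℕ} (l : ℕ) (P : NCPart n) : ℕ :=
  (P.1.parts.filter fun B => B.card = l).card

/-! Listing, for `j = 0, …, n`, the size of the block with least element `j` (or `0` if there is
none) encodes a non-crossing partition of `[n]` as a Łukasiewicz word of length `n + 1`; conversely,
the least element of the block of `i` is read off the lattice path of the word as the last time up
to `i` at which the path is no higher than after step `i`. By the cycle lemma, exactly one of the
`n + 1` rotations of any sequence of `n + 1` naturals with sum `n` is a Łukasiewicz word. Hence
`n + 1` times the mixed moment is the sum over all such sequences of the number of pairs of
positions holding `k` and `l`, and stars and bars counts these for each of the `(n + 1) n` ordered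
pairs of distinct positions. -/

section

open Finset

lemma card_filter_comp_equiv_eq {ι κ β : Type*} [Fintype ι] [Fintype κ] [DecidableEq β]
    (e : ι ≃ κ) (t : κ → β) (b : β) : #{i | (t ∘ e) i = b} = #{i | t i = b} :=
  card_equiv e (by simp)

section Antidiagonal

variable {ι : Type*} [DecidableEq ι]

lemma card_piAntidiag_nat (s : Finset ι) (m : ℕ) :
    #(piAntidiag s m) = (#s + m - 1).choose m := by
  rw [← card_finsuppAntidiag_nat_eq_choose, finsuppAntidiag, card_map, card_attach]

lemma card_filter_forall_eq_piAntidiag {μ : Type*} [AddCancelCommMonoid μ] [HasAntidiagonal μ]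
    [DecidableEq μ] {s u : Finset ι} (hu : u ⊆ s) (g : ι → μ) (m : μ) :
    #{f ∈ piAntidiag s (m + ∑ i ∈ u, g i) | ∀ i ∈ u, f i = g i} = #(piAntidiag (s \ u) m) := by
  have sum_split (f : ι → μ) : ∑ i ∈ s, f i = ∑ i ∈ s \ u, f i + ∑ i ∈ u, f i :=
    (sum_sdiff hu).symm
  refine card_nbij' (fun f ↦ u.piecewise (fun _ ↦ 0) f) (fun f ↦ u.piecewise g f) ?_ ?_ ?_ ?_
  · intro f hf
    simp only [coe_filter, mem_piAntidiag, Set.mem_ofPred_eq] at hf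
    obtain ⟨⟨hsum, hsupp⟩, hfg⟩ := hf
    rw [sum_split, sum_congr rfl hfg, add_left_inj] at hsum
    simp only [mem_coe, mem_piAntidiag]
    refine ⟨?_, by grind [piecewise]⟩
    rw [← hsum]
    exact sum_congr rfl fun i hi ↦ piecewise_eq_of_notMem _ _ _ (mem_sdiff.1 hi).2
  · intro f hf
    simp only [mem_coe, mem_piAntidiag] at hf
    simp only [coe_filter, mem_piAntidiag, Set.mem_ofPred_eq]
    have hfg : ∀ i ∈ u, u.piecewise g f i = g i := fun i hi ↦ piecewise_eq_of_mem _ _ _ hi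
    refine ⟨⟨?_, by grind [piecewise]⟩, hfg⟩
    rw [sum_split, sum_congr rfl hfg, ← hf.1]
    congr 1
    exact sum_congr rfl fun i hi ↦ piecewise_eq_of_notMem _ _ _ (mem_sdiff.1 hi).2
  · intro f hf
    have hfg := (mem_filter.1 hf).2
    ext i
    grind [piecewise]
  · intro f hf
    have hsupp := (mem_piAntidiag.1 hf).2
    ext i
    by_cases hi : i ∈ u
    · have hfi : f i = 0 := by grind
      simp [hi, hfi]
    · simp [hi]

lemma card_filter_eq_and_eq_piAntidiag {s : Finset ι} {i j : ι} (hi : i ∈ s) (hj : j ∈ s)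
    (hij : i ≠ j) (k l n : ℕ) :
    #{f ∈ piAntidiag s n | f i = k ∧ f j = l} =
      if k + l ≤ n then (#s - 2 + (n - k - l) - 1).choose (n - k - l) else 0 := by
  have hu : {i, j} ⊆ s := by grind
  split_ifs with hkl
  · obtain ⟨m, rfl⟩ := Nat.exists_eq_add_of_le' hkl
    have hcard := card_filter_forall_eq_piAntidiag hu (Function.update (fun _ ↦ l) i k) m
    rw [sum_pair hij, card_piAntidiag_nat, card_sdiff_of_subset hu, card_pair hij] at hcard
    simpa [hij.symm, Nat.sub_sub] using hcard
  · rw [card_eq_zero, filter_eq_empty_iff]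
    rintro f hf ⟨rfl, rfl⟩
    refine hkl ?_
    rw [← sum_pair hij, ← (mem_piAntidiag.1 hf).1]
    exact sum_le_sum_of_subset hu

lemma sum_card_eq_mul_card_eq_piAntidiag [Fintype ι] {k l : ℕ} (hkl : k ≠ l) (n : ℕ) :
    ∑ f ∈ piAntidiag (univ : Finset ι) n, #{i | f i = k} * #{i | f i = l} =
      Fintype.card ι * (Fintype.card ι - 1) * if k + l ≤ n then
        (Fintype.card ι - 2 + (n - k - l) - 1).choose (n - k - l) else 0 := by
  have count_pairs (f : ι → ℕ) : #{i | f i = k} * #{i | f i = l} =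
      #{p ∈ univ.offDiag | f p.1 = k ∧ f p.2 = l} := by
    rw [← card_product]
    congr 1
    ext p
    simp only [mem_product, mem_filter, mem_univ, true_and, mem_offDiag]
    grind
  calc ∑ f ∈ piAntidiag (univ : Finset ι) n, #{i | f i = k} * #{i | f i = l}
    _ = ∑ p ∈ univ.offDiag, #{f ∈ piAntidiag (univ : Finset ι) n | f p.1 = k ∧ f p.2 = l} := by
      simp only [count_pairs]
      exact sum_card_bipartiteAbove_eq_sum_card_bipartiteBelow _
    _ = _ := by
      rw [sum_congr rfl fun p hp ↦ card_filter_eq_and_eq_piAntidiag (mem_univ p.1) (mem_univ p.2)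
        (mem_offDiag.1 hp).2.2 k l n, sum_const, offDiag_card, smul_eq_mul, card_univ,
        Nat.mul_sub_one]

lemma sum_filter_comp_mem_piAntidiag {μ M : Type*} [AddCommMonoid μ] [HasAntidiagonal μ]
    [DecidableEq μ] [AddCommMonoid M] [Fintype ι] {n : μ} {A : Finset (ι → μ)}
    (hA : A ⊆ piAntidiag univ n) (e : Equiv.Perm ι) (F : (ι → μ) → M) :
    ∑ f ∈ piAntidiag univ n with f ∘ e ∈ A, F (f ∘ e) = ∑ f ∈ A, F f := by
  refine sum_nbij' (· ∘ e) (· ∘ e.symm) ?_ ?_ ?_ ?_ ?_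
  · simp
  · intro f hf
    have hsum : ∑ i, f (e.symm i) = n := by
      rw [Equiv.sum_comp e.symm f, (mem_piAntidiag.1 (hA hf)).1]
    simp [Function.comp_assoc, hf, hsum]
  · simp [Function.comp_assoc]
  · simp [Function.comp_assoc]
  · simp

end Antidiagonal

section CycleLemma

lemma existsUnique_fin_forall_le_apply_add {N : ℕ} [NeZero N] {h : ℕ → ℤ}
    (hN : ∀ m, h (m + N) = h m - 1) : ∃! r : Fin N, ∀ i < N, h r ≤ h (r + i) := by
  -- The lexicographic order makes `r` the leftmost minimum of `h` on one period.
  obtain ⟨r, hr⟩ := Finite.exists_min fun r : Fin N ↦ toLex (h r, r)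
  replace hr (s : Fin N) : h r < h s ∨ h r = h s ∧ r ≤ s := Prod.Lex.toLex_le_toLex.1 (hr s)
  have hr_min : ∀ i < N, h r ≤ h (r + i) := by
    intro i hi
    by_cases hlt : r + i < N
    · rcases hr ⟨r + i, hlt⟩ with hlow | ⟨hlow, -⟩
      exacts [hlow.le, hlow.le]
    · obtain ⟨q, hq⟩ := Nat.exists_eq_add_of_le' (not_lt.1 hlt)
      have hqr : q < r := by omega
      have hlow : h r < h q := (hr ⟨q, by omega⟩).resolve_right fun hle ↦ hqr.not_ge hle.2
      rw [hq, hN]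
      omega
  have not_lt_of_min {a b : Fin N} (ha : ∀ i < N, h a ≤ h (a + i))
      (hb : ∀ i < N, h b ≤ h (b + i)) : ¬ a < b := by
    intro hab
    have hle := ha (b - a) (by omega)
    have hge := hb (a + N - b) (by omega)
    rw [show (a : ℕ) + (b - a) = b by omega] at hle
    rw [show (b : ℕ) + (a + N - b) = a + N by omega, hN] at hge
    omega
  exact ⟨r, hr_min, fun s hs ↦ le_antisymm (not_lt.1 (not_lt_of_min hr_min hs))
    (not_lt.1 (not_lt_of_min hs hr_min))⟩

variable {n : ℕ}

/-- The height after `m` steps of the lattice path whose `j`-th step is `t j - 1`, with `t`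
extended periodically with period `n + 1`. -/
def wordHeight (t : Fin (n + 1) → ℕ) (m : ℕ) : ℤ :=
  ∑ j ∈ range m, ((t (Fin.ofNat (n + 1) j) : ℤ) - 1)

lemma wordHeight_zero (t : Fin (n + 1) → ℕ) : wordHeight t 0 = 0 :=
  sum_range_zero _

lemma wordHeight_succ (t : Fin (n + 1) → ℕ) (j : Fin n) :
    wordHeight t (j + 1) = wordHeight t j + t j.castSucc - 1 := by
  have hj : Fin.ofNat (n + 1) j = j.castSucc := by ext; simp
  rw [wordHeight, sum_range_succ, hj, wordHeight, add_sub_assoc]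

lemma wordHeight_add_period (t : Fin (n + 1) → ℕ) (m : ℕ) :
    wordHeight t (m + (n + 1)) = wordHeight t m + (∑ j, (t j : ℤ) - (n + 1)) := by
  have one_period : ∑ j ∈ range (n + 1), ((t (Fin.ofNat (n + 1) j) : ℤ) - 1) =
      ∑ j, (t j : ℤ) - (n + 1) := by
    rw [sum_range]
    simp
  rw [add_comm m, wordHeight, sum_range_add, one_period, add_comm]
  simp [wordHeight, Fin.ofNat]

lemma wordHeight_rotate (t : Fin (n + 1) → ℕ) (r : Fin (n + 1)) (m : ℕ) :
    wordHeight (t ∘ Equiv.addRight r) m = wordHeight t (r + m) - wordHeight t r := by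
  have shift (j : ℕ) : Fin.ofNat (n + 1) j + r = Fin.ofNat (n + 1) (r + j) := by
    ext
    simp [Fin.val_add, add_comm]
  simp only [wordHeight, Function.comp_apply, Equiv.coe_addRight, shift,
    sum_range_add_sub_sum_range]

/-- The Łukasiewicz words of length `n + 1`: the sequences of naturals with sum `n` all of whose
proper prefixes have a nonnegative height. -/
def lukasiewiczWords (n : ℕ) : Finset (Fin (n + 1) → ℕ) :=
  {t ∈ piAntidiag univ n | ∀ m ≤ n, 0 ≤ wordHeight t m}

lemma mem_lukasiewiczWords {t : Fin (n + 1) → ℕ} :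
    t ∈ lukasiewiczWords n ↔ ∑ j, t j = n ∧ ∀ m ≤ n, 0 ≤ wordHeight t m := by
  simp [lukasiewiczWords]

lemma existsUnique_rotate_mem_lukasiewiczWords {t : Fin (n + 1) → ℕ} (ht : ∑ j, t j = n) :
    ∃! r, t ∘ Equiv.addRight r ∈ lukasiewiczWords n := by
  have period (m : ℕ) : wordHeight t (m + (n + 1)) = wordHeight t m - 1 := by
    rw [wordHeight_add_period, ← Nat.cast_sum, ht]
    ring
  have sum_rotate (r : Fin (n + 1)) : ∑ j, (t ∘ Equiv.addRight r) j = n :=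
    (Equiv.sum_comp _ t).trans ht
  simpa only [mem_lukasiewiczWords, sum_rotate, true_and, wordHeight_rotate, sub_nonneg,
    Nat.lt_succ_iff] using existsUnique_fin_forall_le_apply_add period

lemma sum_piAntidiag_eq_nsmul_sum_lukasiewiczWords {M : Type*} [AddCommMonoid M]
    {F : (Fin (n + 1) → ℕ) → M} (hF : ∀ t r, F (t ∘ Equiv.addRight r) = F t) :
    ∑ t ∈ piAntidiag univ n, F t = (n + 1) • ∑ t ∈ lukasiewiczWords n, F t := by
  have single_rotation (t) (ht : t ∈ piAntidiag univ n) :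
      F t = ∑ r with t ∘ Equiv.addRight r ∈ lukasiewiczWords n, F (t ∘ Equiv.addRight r) := by
    obtain ⟨r, hr, hr_unique⟩ :=
      existsUnique_rotate_mem_lukasiewiczWords (mem_piAntidiag.1 ht).1
    rw [show ({r | t ∘ Equiv.addRight r ∈ lukasiewiczWords n} : Finset _) = {r} by grind,
      sum_singleton, hF]
  calc ∑ t ∈ piAntidiag univ n, F t
    _ = ∑ t ∈ piAntidiag univ n, ∑ r with t ∘ Equiv.addRight r ∈ lukasiewiczWords n,
          F (t ∘ Equiv.addRight r) := sum_congr rfl single_rotation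
    _ = ∑ r : Fin (n + 1), ∑ t ∈ piAntidiag univ n with t ∘ Equiv.addRight r ∈ lukasiewiczWords n,
          F (t ∘ Equiv.addRight r) :=
      sum_comm' fun t r ↦ by simp only [mem_filter, mem_univ, true_and, and_true]
    _ = ∑ _r : Fin (n + 1), ∑ t ∈ lukasiewiczWords n, F t :=
      sum_congr rfl fun r _ ↦ sum_filter_comp_mem_piAntidiag (filter_subset _ _) _ F
    _ = (n + 1) • ∑ t ∈ lukasiewiczWords n, F t := by
      rw [sum_const, card_univ, Fintype.card_fin]

end CycleLemma

section LastLE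

/-- `j` is the last time up to `i` at which the path `h` is at or below its height at time `i + 1`.
In the path of a non-crossing partition this makes `j` the least element of the block of `i`. -/
structure IsLastLE (h : ℕ → ℤ) (i j : ℕ) : Prop where
  le : j ≤ i
  apply_le : h j ≤ h (i + 1)
  lt_apply : ∀ m, j < m → m ≤ i → h (i + 1) < h m

variable {h : ℕ → ℤ} {i i' j j' : ℕ}

lemma exists_isLastLE (hi : h 0 ≤ h (i + 1)) : ∃ j, IsLastLE h i j := by
  refine ⟨Nat.findGreatest (fun j ↦ h j ≤ h (i + 1)) i, Nat.findGreatest_le _,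
    Nat.findGreatest_spec (P := fun j ↦ h j ≤ h (i + 1)) i.zero_le hi, fun m hjm hmi ↦ ?_⟩
  exact not_le.1 (Nat.findGreatest_is_greatest hjm hmi)

namespace IsLastLE

lemma unique (hj : IsLastLE h i j) (hj' : IsLastLE h i j') : j = j' := by
  by_contra hne
  rcases Nat.lt_or_gt_of_ne hne with hlt | hlt
  · exact (hj.lt_apply j' hlt hj'.le).not_ge hj'.apply_le
  · exact (hj'.lt_apply j hlt hj.le).not_ge hj.apply_le

lemma apply_succ_le (hj : IsLastLE h i j) : h (i + 1) ≤ h (j + 1) := by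
  rcases hj.le.eq_or_lt with rfl | hlt
  · rfl
  · exact (hj.lt_apply (j + 1) j.lt_succ_self hlt).le

lemma self (hj : IsLastLE h i j) : IsLastLE h j j where
  le := le_rfl
  apply_le := hj.apply_le.trans hj.apply_succ_le
  lt_apply _ hjm hmj := absurd hmj hjm.not_ge

lemma apply_succ_lt (hi : IsLastLE h i j) (hi' : IsLastLE h i' j) (hii' : i < i') :
    h (i' + 1) < h (i + 1) :=
  hi'.lt_apply (i + 1) (Nat.lt_succ_of_le hi.le) hii'

lemma eq_of_crossing {a b c d : ℕ} (ha : IsLastLE h a j) (hb : IsLastLE h b j')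
    (hc : IsLastLE h c j) (hd : IsLastLE h d j') (hab : a < b) (hbc : b < c) (hcd : c < d) :
    j = j' := by
  have hja := ha.le
  have hjb := hb.le
  by_contra hne
  rcases Nat.lt_or_gt_of_ne hne with hlt | hlt
  · have hj' := hc.lt_apply j' hlt (by omega)
    have hc' := hd.lt_apply (c + 1) (by omega) hcd
    have hd' := hd.apply_le
    omega
  · have hj := hb.lt_apply j hlt (by omega)
    have hb' := hc.lt_apply (b + 1) (by omega) hbc
    have hc' := hc.apply_le
    omega

end IsLastLE

end LastLE

section Retraction

/-- A map `f` sending every element to the least element of its block in some non-crossing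
partition, the blocks being the nonempty fibres of `f`. -/
structure IsNonCrossingRetraction {α : Type*} [LinearOrder α] (f : α → α) : Prop where
  apply_le : ∀ x, f x ≤ x
  apply_apply : ∀ x, f (f x) = f x
  apply_eq_of_crossing : ∀ a b c d, a < b → b < c → c < d → f a = f c → f b = f d → f a = f b

lemma IsNonCrossingRetraction.lt_apply {α : Type*} [LinearOrder α] {f : α → α}
    (hf : IsNonCrossingRetraction f) {a b : α} (hab : a ≤ b) (hfab : f a < f b) : a < f b := by
  by_contra! hle
  have hne : f b ≠ a := fun h ↦ hfab.ne (by rw [← h, hf.apply_apply])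
  have hab' : a < b := hab.lt_of_ne (by rintro rfl; exact hfab.ne rfl)
  have heq := hf.apply_eq_of_crossing (f a) (f b) a b hfab (hle.lt_of_ne hne) hab'
    (hf.apply_apply a) (hf.apply_apply b)
  rw [hf.apply_apply, hf.apply_apply] at heq
  exact hfab.ne heq

variable {n : ℕ} {f : Fin n → Fin n} {t : Fin (n + 1) → ℕ}

/-- The fibre cardinalities of `f`, followed by a final `0`. -/
def fiberWord (f : Fin n → Fin n) (j : Fin (n + 1)) : ℕ :=
  #{x | (f x).castSucc = j}

lemma fiberWord_castSucc (f : Fin n → Fin n) (j : Fin n) :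
    fiberWord f j.castSucc = #{x | f x = j} := by
  simp [fiberWord]

lemma fiberWord_last (f : Fin n → Fin n) : fiberWord f (Fin.last n) = 0 := by
  simp [fiberWord]

lemma sum_fiberWord (f : Fin n → Fin n) : ∑ j, fiberWord f j = n :=
  (card_eq_sum_card_fiberwise fun _ _ ↦ mem_univ _).symm.trans (card_fin n)

lemma wordHeight_fiberWord (hf : ∀ x, f x ≤ x) {m : ℕ} (hm : m ≤ n) :
    wordHeight (fiberWord f) m = #{x : Fin n | f x < m ∧ m ≤ x} := by
  have sum_prefix : ∑ j ∈ range m, fiberWord f (Fin.ofNat (n + 1) j) =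
      #{x : Fin n | (f x : ℕ) < m} := by
    rw [card_eq_sum_card_fiberwise (t := range m) (f := fun x ↦ (f x : ℕ)) (by simp [Set.MapsTo])]
    refine sum_congr rfl fun j hj ↦ ?_
    rw [fiberWord, filter_filter]
    congr 1
    ext x
    have hjm := mem_range.1 hj
    simp only [mem_filter, mem_univ, true_and, Fin.ext_iff, Fin.val_castSucc, Fin.val_ofNat,
      Nat.mod_eq_of_lt (show j < n + 1 by omega)]
    omega
  have split_prefix : #{x : Fin n | (f x : ℕ) < m} = m + #{x : Fin n | f x < m ∧ m ≤ x} := by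
    rw [← card_filter_add_card_filter_not fun x : Fin n ↦ (x : ℕ) < m, filter_filter, filter_filter]
    have card_below : #{x : Fin n | (f x : ℕ) < m ∧ (x : ℕ) < m} = m := by
      rw [filter_congr fun x _ ↦ and_iff_right_of_imp (lt_of_le_of_lt (Fin.le_def.1 (hf x))),
        Fin.card_filter_val_lt, min_eq_right hm]
    simp only [card_below, not_lt]
  rw [wordHeight, sum_sub_distrib, ← Nat.cast_sum, sum_prefix, split_prefix]
  simp

namespace IsNonCrossingRetraction

lemma fiberWord_mem_lukasiewiczWords (hf : IsNonCrossingRetraction f) :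
    fiberWord f ∈ lukasiewiczWords n := by
  refine mem_lukasiewiczWords.2 ⟨sum_fiberWord f, fun m hm ↦ ?_⟩
  rw [wordHeight_fiberWord hf.apply_le hm]
  positivity

lemma isLastLE_wordHeight (hf : IsNonCrossingRetraction f) (i : Fin n) :
    IsLastLE (wordHeight (fiberWord f)) i (f i) := by
  have hle : (f i : ℕ) ≤ i := hf.apply_le i
  refine ⟨hle, ?_, fun m hfm hmi ↦ ?_⟩
  · rw [wordHeight_fiberWord hf.apply_le (by omega), wordHeight_fiberWord hf.apply_le (by omega),
      Nat.cast_le]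
    refine card_le_card (monotone_filter_right _ fun x _ ⟨hlt, hge⟩ ↦ ?_)
    have hix : i < x := by
      by_contra! hxi
      exact (hf.lt_apply hxi hlt).not_ge hge
    constructor <;> omega
  · rw [wordHeight_fiberWord hf.apply_le (by omega), wordHeight_fiberWord hf.apply_le (by omega),
      Nat.cast_lt]
    refine card_lt_card ((ssubset_iff_of_subset ?_).2 ⟨i, ?_, ?_⟩)
    · refine monotone_filter_right _ fun x _ ⟨_, _⟩ ↦ ?_
      have hfx : f x ≤ f i := by
        by_contra! hfi
        have := hf.lt_apply (Fin.le_def.2 (by omega)) hfi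
        omega
      constructor <;> omega
    · simp only [mem_filter, mem_univ, true_and]
      omega
    · simp only [mem_filter, mem_univ, true_and]
      omega

lemma eq_of_fiberWord_eq {g : Fin n → Fin n} (hf : IsNonCrossingRetraction f)
    (hg : IsNonCrossingRetraction g) (hfg : fiberWord f = fiberWord g) : f = g :=
  funext fun i ↦ Fin.ext <| (hf.isLastLE_wordHeight i).unique (hfg ▸ hg.isLastLE_wordHeight i)

end IsNonCrossingRetraction

lemma isNonCrossingRetraction_of_isLastLE {h : ℕ → ℤ} (hf : ∀ i : Fin n, IsLastLE h i (f i)) :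
    IsNonCrossingRetraction f where
  apply_le i := (hf i).le
  apply_apply i := Fin.ext <| (hf (f i)).unique (hf i).self
  apply_eq_of_crossing a b c d hab hbc hcd hac hbd := Fin.ext <|
    (hf a).eq_of_crossing (hf b) (hac ▸ hf c) (hbd ▸ hf d) hab hbc hcd

lemma fiberWord_le_of_isLastLE (hf : ∀ i : Fin n, IsLastLE (wordHeight t) i (f i))
    (j : Fin (n + 1)) : fiberWord f j ≤ t j := by
  cases j using Fin.lastCases with
  | last => simp [fiberWord_last]
  | cast j =>
    have hIcc : #(Icc (wordHeight t j) (wordHeight t (j + 1))) = t j.castSucc := by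
      rw [Int.card_Icc, wordHeight_succ]
      omega
    rw [fiberWord_castSucc, ← hIcc]
    refine card_le_card_of_injOn (fun x ↦ wordHeight t (x + 1)) ?_ ?_
    · intro x hx
      obtain rfl : f x = j := by simpa using hx
      exact mem_Icc.2 ⟨(hf x).apply_le, (hf x).apply_succ_le⟩
    · intro x hx y hy hxy
      obtain rfl : f x = j := by simpa using hx
      have hfy : f y = f x := by simpa using hy
      have hy_last : IsLastLE (wordHeight t) y (f x) := hfy ▸ hf y
      rcases lt_trichotomy x y with hlt | heq | hlt
      · exact absurd hxy ((hf x).apply_succ_lt hy_last hlt).ne'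
      · exact heq
      · exact absurd hxy (hy_last.apply_succ_lt (hf x) hlt).ne

lemma exists_fiberWord_eq (ht : t ∈ lukasiewiczWords n) :
    ∃ f : Fin n → Fin n, IsNonCrossingRetraction f ∧ fiberWord f = t := by
  obtain ⟨hsum, hheight⟩ := mem_lukasiewiczWords.1 ht
  have exists_last (i : Fin n) : ∃ j : Fin n, IsLastLE (wordHeight t) i j := by
    obtain ⟨j, hj⟩ := exists_isLastLE (h := wordHeight t) (i := i)
      ((wordHeight_zero t).trans_le (hheight _ (by omega)))
    exact ⟨⟨j, hj.le.trans_lt i.isLt⟩, hj⟩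
  choose f hf using exists_last
  have sum_eq : ∑ j, fiberWord f j = ∑ j, t j := (sum_fiberWord f).trans hsum.symm
  refine ⟨f, isNonCrossingRetraction_of_isLastLE hf, funext fun j ↦ ?_⟩
  exact (sum_eq_sum_iff_of_le fun j _ ↦ fiberWord_le_of_isLastLE hf j).1 sum_eq j (mem_univ j)

end Retraction

section BlockMin

variable {α : Type*} [LinearOrder α] [Fintype α]

/-- The least element of the block of `P` containing `x`. -/
def blockMin (P : Finpartition (univ : Finset α)) (x : α) : α :=
  (P.part x).min' ⟨x, P.mem_part_self.2 (mem_univ x)⟩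

variable (P : Finpartition (univ : Finset α)) {x y : α}

lemma blockMin_mem_part (x : α) : blockMin P x ∈ P.part x :=
  min'_mem _ _

lemma blockMin_le (h : y ∈ P.part x) : blockMin P x ≤ y :=
  min'_le _ _ h

lemma part_blockMin (x : α) : P.part (blockMin P x) = P.part x :=
  (P.mem_part_iff_part_eq_part (mem_univ _) (mem_univ x)).1 (blockMin_mem_part P x)

lemma blockMin_eq_blockMin_iff : blockMin P x = blockMin P y ↔ P.part x = P.part y := by
  refine ⟨fun h ↦ ?_, fun h ↦ by simp only [blockMin, h]⟩
  rw [← part_blockMin, h, part_blockMin]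

lemma blockMin_blockMin (x : α) : blockMin P (blockMin P x) = blockMin P x :=
  (blockMin_eq_blockMin_iff P).2 (part_blockMin P x)

lemma filter_blockMin_eq (x : α) :
    ({y | blockMin P y = blockMin P x} : Finset α) = P.part x := by
  ext y
  rw [mem_filter_univ, blockMin_eq_blockMin_iff,
    P.mem_part_iff_part_eq_part (mem_univ _) (mem_univ _)]

lemma mem_parts_iff_exists_part_eq {B : Finset α} : B ∈ P.parts ↔ ∃ x, P.part x = B := by
  refine ⟨fun hB ↦ ?_, ?_⟩
  · obtain ⟨x, hx⟩ := P.nonempty_of_mem_parts hB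
    exact ⟨x, P.part_eq_of_mem hB hx⟩
  · rintro ⟨x, rfl⟩
    exact P.part_mem.2 (mem_univ x)

lemma blockMin_injective :
    Function.Injective (blockMin : Finpartition (univ : Finset α) → α → α) := by
  intro P Q h
  have part_eq (x : α) : P.part x = Q.part x := by
    rw [← filter_blockMin_eq, h, filter_blockMin_eq]
  ext B
  simp only [mem_parts_iff_exists_part_eq, part_eq]

lemma blockMin_ofSetoid_ker {f : α → α} [DecidableRel (Setoid.ker f)] (hle : ∀ x, f x ≤ x)
    (hidem : ∀ x, f (f x) = f x) : blockMin (Finpartition.ofSetoid (Setoid.ker f)) = f := by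
  have mem_part_iff {x y : α} :
      y ∈ (Finpartition.ofSetoid (Setoid.ker f)).part x ↔ f x = f y := by
    rw [Finpartition.mem_part_ofSetoid_iff_rel, Setoid.ker_def]
  funext x
  refine le_antisymm (blockMin_le _ (mem_part_iff.2 (hidem x).symm)) ?_
  rw [mem_part_iff.1 (blockMin_mem_part _ x)]
  exact hle _

end BlockMin

namespace NCPart

variable {n : ℕ}

/-- The word whose `j`-th letter is the size of the block of `P` with least element `j`, and `0` if
there is none. -/
def toWord (P : NCPart n) : Fin (n + 1) → ℕ :=
  fiberWord (blockMin P.1)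

lemma isNonCrossingRetraction_blockMin (P : NCPart n) : IsNonCrossingRetraction (blockMin P.1) where
  apply_le x := blockMin_le _ (P.1.mem_part_self.2 (mem_univ x))
  apply_apply := blockMin_blockMin P.1
  apply_eq_of_crossing a b c d hab hbc hcd hac hbd := by
    have mem_part (x : Fin n) : x ∈ P.1.part x := P.1.mem_part_self.2 (mem_univ x)
    have part_mem (x : Fin n) : P.1.part x ∈ P.1.parts := P.1.part_mem.2 (mem_univ x)
    rw [blockMin_eq_blockMin_iff] at hac hbd ⊢
    exact P.2 a b c d hab hbc hcd _ (part_mem a) _ (part_mem b) (mem_part a) (hac ▸ mem_part c)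
      (mem_part b) (hbd ▸ mem_part d)

lemma exists_blockMin_eq {f : Fin n → Fin n} (hf : IsNonCrossingRetraction f) :
    ∃ P : NCPart n, blockMin P.1 = f := by
  classical
  have blockMin_eq := blockMin_ofSetoid_ker hf.apply_le hf.apply_apply
  refine ⟨⟨Finpartition.ofSetoid (Setoid.ker f), ?_⟩, blockMin_eq⟩
  intro a b c d hab hbc hcd B hB B' hB' ha hc hb hd
  obtain rfl := Finpartition.part_eq_of_mem _ hB ha
  obtain rfl := Finpartition.part_eq_of_mem _ hB' hb
  rw [← filter_blockMin_eq, blockMin_eq, mem_filter_univ] at hc hd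
  rw [← blockMin_eq_blockMin_iff, blockMin_eq]
  exact hf.apply_eq_of_crossing a b c d hab hbc hcd hc.symm hd.symm

lemma bijOn_toWord : Set.BijOn (toWord (n := n)) Set.univ (lukasiewiczWords n) := by
  refine ⟨fun P _ ↦ P.isNonCrossingRetraction_blockMin.fiberWord_mem_lukasiewiczWords,
    fun P _ Q _ h ↦ Subtype.ext <| blockMin_injective <|
      P.isNonCrossingRetraction_blockMin.eq_of_fiberWord_eq Q.isNonCrossingRetraction_blockMin h,
    fun t ht ↦ ?_⟩
  obtain ⟨f, hf, rfl⟩ := exists_fiberWord_eq ht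
  obtain ⟨P, rfl⟩ := exists_blockMin_eq hf
  exact ⟨P, Set.mem_univ P, rfl⟩

lemma numBlocksOfSize_eq_card_toWord_eq {k : ℕ} (hk : 1 ≤ k) (P : NCPart n) :
    numBlocksOfSize k P = #{j | P.toWord j = k} := by
  let block (j : Fin (n + 1)) : Finset (Fin n) := {x | (blockMin P.1 x).castSucc = j}
  have card_block (j) : #(block j) = P.toWord j := rfl
  have block_eq_part (x : Fin n) : block (blockMin P.1 x).castSucc = P.1.part x := by
    simp only [block, Fin.castSucc_inj, filter_blockMin_eq]
  have exists_eq_blockMin (j) (hj : P.toWord j = k) : ∃ x, (blockMin P.1 x).castSucc = j := by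
    obtain ⟨x, hx⟩ : (block j).Nonempty := by
      rw [← card_pos, card_block, hj]
      exact hk
    exact ⟨x, (mem_filter_univ x).1 hx⟩
  refine (card_nbij block ?_ ?_ ?_).symm
  · intro j hj
    obtain ⟨x, rfl⟩ := exists_eq_blockMin j (by simpa using hj)
    refine mem_filter.2 ⟨?_, by simpa [card_block] using hj⟩
    rw [block_eq_part]
    exact P.1.part_mem.2 (mem_univ x)
  · intro i hi j hj hij
    obtain ⟨x, rfl⟩ := exists_eq_blockMin i (by simpa using hi)
    obtain ⟨y, rfl⟩ := exists_eq_blockMin j (by simpa using hj)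
    rw [block_eq_part, block_eq_part] at hij
    rw [(blockMin_eq_blockMin_iff P.1).2 hij]
  · intro B hB
    obtain ⟨hB, hcard⟩ := mem_filter.1 hB
    obtain ⟨x, rfl⟩ := (mem_parts_iff_exists_part_eq P.1).1 hB
    refine ⟨(blockMin P.1 x).castSucc, ?_, block_eq_part x⟩
    rw [mem_coe, mem_filter_univ, ← card_block, block_eq_part, hcard]

lemma nsmul_sum_toWord {M : Type*} [AddCommMonoid M] {F : (Fin (n + 1) → ℕ) → M}
    (hF : ∀ t r, F (t ∘ Equiv.addRight r) = F t) :
    (n + 1) • ∑ P : NCPart n, F P.toWord = ∑ t ∈ piAntidiag univ n, F t := by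
  have hbij := bijOn_toWord (n := n)
  rw [← coe_univ] at hbij
  rw [sum_piAntidiag_eq_nsmul_sum_lukasiewiczWords hF,
    sum_nbij toWord hbij.mapsTo hbij.injOn hbij.surjOn fun _ _ ↦ rfl]

end NCPart

end

/-- For `n ≥ 2` and `k ≠ l` with `k, l ≥ 1`, the mixed moment satisfies
`Σ_{π ∈ NC(n)} k_k(π)·k_l(π) = n · binom(2n − k − l − 2, n − 2)`, with the convention
`binom(a,b) = 0` when `a < b` (the `if` captures this convention over the integers:
`n − 2 ≤ 2n − k − l − 2 ↔ k + l ≤ n`). -/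
theorem mixedMoment_numBlocksOfSize (n k l : ℕ) (hn : 2 ≤ n) (hk : 1 ≤ k) (hl : 1 ≤ l)
    (hkl : k ≠ l) :
    ∑ π : NCPart n, numBlocksOfSize k π * numBlocksOfSize l π =
      if k + l ≤ n then n * Nat.choose (2 * n - k - l - 2) (n - 2) else 0 := by
  have cycle := NCPart.nsmul_sum_toWord (n := n)
    (F := fun t ↦ Finset.card {i | t i = k} * Finset.card {i | t i = l})
    fun t r ↦ by simp only [card_filter_comp_equiv_eq]
  refine Nat.eq_of_mul_eq_mul_left n.succ_pos ?_
  simp only [NCPart.numBlocksOfSize_eq_card_toWord_eq hk,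
    NCPart.numBlocksOfSize_eq_card_toWord_eq hl]
  rw [← smul_eq_mul, cycle, sum_card_eq_mul_card_eq_piAntidiag hkl, Fintype.card_fin,
    Nat.add_sub_cancel, mul_assoc]
  congr 1
  split_ifs with hle
  · rw [show n + 1 - 2 + (n - k - l) - 1 = 2 * n - k - l - 2 by omega,
      ← Nat.choose_symm (by omega : n - k - l ≤ 2 * n - k - l - 2),
      show 2 * n - k - l - 2 - (n - k - l) = n - 2 by omega]
  · rw [mul_zero]
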